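/- Let λ be an l-restricted partition and m a positive integer. Then ℓ(Mull(λ')) ≤ m if and only if λ can be written as a sum λ = λ^1 + … + λ^t of partitions, where for each 1 ≤ i ≤ t the partition λ^i is l-restricted and m_i-distinguished for some integer 0 < m_i < l, and m = m_1 + … + m_t. (In the paper's terminology, ℓ(Mull(λ')) ≤ m is the condition that the restricted partition λ is m-special, i.e. that the irreducible polynomial module L(λ) for the quantum general linear group is a composition factor of the m-fold tensor power of the truncated symmetric algebra of the natural module.) -/

import Mathlib

noncomputable section

/-- `p : ℕ → ℕ` represents the partition `λ` with `p i = λ_{i+1}` (0-indexed parts):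
a weakly decreasing, eventually zero sequence. -/
def IsPartition (p : ℕ → ℕ) : Prop :=
  (∀ i j, i ≤ j → p j ≤ p i) ∧ ∃ N, ∀ i, N ≤ i → p i = 0

/-- `ℓ(λ)`, the number of nonzero parts. -/
def plen (p : ℕ → ℕ) : ℕ := sInf {N | p N = 0}

/-- the degree (number of boxes) of the partition. -/
def pdeg (p : ℕ → ℕ) : ℕ := ∑ i ∈ Finset.range (plen p), p i

/-- `λ` is `l`-regular: no `l` consecutive parts are equal and nonzero. -/
def IsLRegular (l : ℕ) (p : ℕ → ℕ) : Prop :=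
  ∀ i, p i ≠ 0 → p (i + l - 1) ≠ p i

/-- `λ` is `l`-restricted: `λ_i - λ_{i+1} < l` for all `i`. -/
def IsLRestricted (l : ℕ) (p : ℕ → ℕ) : Prop :=
  ∀ i, p i - p (i + 1) < l

/-- the transpose (conjugate) partition. -/
def conjP (p : ℕ → ℕ) : ℕ → ℕ :=
  fun j => ((Finset.range (plen p)).filter fun i => j < p i).card

/-- the minimal `h ≥ 1` with `λ_1 - λ_{h+1} + h ≥ l`: when `e(λ) > l`, the first
`l`-segment of the `l`-edge lies in rows `1, …, h`. -/
def firstSeg (l : ℕ) (p : ℕ → ℕ) : ℕ := sInf {h | 1 ≤ h ∧ l ≤ p 0 - p h + h}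

/-- removal of the `l`-edge (with fuel): if `e(λ) ≤ l` the whole edge is removed,
otherwise the first `l`-segment is removed from rows `1, …, h` (`h = firstSeg`) and one
recurses on `(λ_{h+1}, λ_{h+2}, …)`. -/
def removeLEdgeAux (l : ℕ) : ℕ → (ℕ → ℕ) → ℕ → ℕ
  | 0, _ => fun _ => 0
  | n + 1, p =>
    if p 0 = 0 then fun _ => 0
    else if p 0 + plen p - 1 ≤ l then fun i => p (i + 1) - 1
    else fun i =>
      if i + 1 < firstSeg l p then p (i + 1) - 1
      else if i + 1 = firstSeg l p then p 0 + firstSeg l p - 1 - l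
      else removeLEdgeAux l n (fun j => p (j + firstSeg l p)) (i - firstSeg l p)

/-- the partition obtained by removing the `l`-edge of `λ`. -/
def removeLEdge (l : ℕ) (p : ℕ → ℕ) : ℕ → ℕ := removeLEdgeAux l (plen p) p

/-- `e_l(λ)`, the number of nodes of the `l`-edge. -/
def elen (l : ℕ) (p : ℕ → ℕ) : ℕ := pdeg p - pdeg (removeLEdge l p)

/-- the length of `Mull(λ)` prescribed by the defining recursion of the Mullineux map. -/
def mullLen (l : ℕ) (p : ℕ → ℕ) : ℕ :=
  if l ∣ elen l p then elen l p - plen p else elen l p - plen p + 1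

/-- the Mullineux map (with fuel): `Mull(0) = 0` and, for `λ ≠ 0` `l`-regular with `ν`
obtained from `λ` by removing the `l`-edge, `Mull(λ)` is the unique `l`-regular partition
whose `l`-edge removal leaves `Mull(ν)` and whose length is `e_l(λ) - ℓ(λ)` if
`l ∣ e_l(λ)` and `e_l(λ) - ℓ(λ) + 1` otherwise. -/
def mullAux (l : ℕ) : ℕ → (ℕ → ℕ) → ℕ → ℕ
  | 0, _ => fun _ => 0
  | n + 1, p =>
    if p 0 = 0 then fun _ => 0
    else
      Classical.epsilon fun μ : ℕ → ℕ =>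
        IsPartition μ ∧ IsLRegular l μ ∧
          removeLEdge l μ = mullAux l n (removeLEdge l p) ∧ plen μ = mullLen l p

/-- the Mullineux map. -/
def mull (l : ℕ) (p : ℕ → ℕ) : ℕ → ℕ := mullAux l (pdeg p) p

/-- the list of Mullineux components (with fuel). -/
def mullCompsAux (l : ℕ) : ℕ → (ℕ → ℕ) → List (ℕ → ℕ)
  | 0, _ => []
  | n + 1, p =>
    if p 0 = 0 then []
    else if elen l p ≤ l then [p]
    else (fun i => if i < firstSeg l p then p i else 0) ::
      mullCompsAux l n (fun j => p (j + firstSeg l p))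

/-- the Mullineux components of `λ`. -/
def mullComps (l : ℕ) (p : ℕ → ℕ) : List (ℕ → ℕ) := mullCompsAux l (plen p) p

/-- edge `l`-connectedness (with fuel): consecutive Mullineux components `α, ρ` satisfy
`α_1 - ρ_1 + ℓ(α) = l`. -/
def edgeConnAux (l : ℕ) : ℕ → (ℕ → ℕ) → Prop
  | 0, _ => True
  | n + 1, p =>
    if elen l p ≤ l then True
    else p 0 + firstSeg l p = l + p (firstSeg l p) ∧
      edgeConnAux l n fun j => p (j + firstSeg l p)

/-- `λ` is edge `l`-connected. -/
def EdgeLConnected (l : ℕ) (p : ℕ → ℕ) : Prop := edgeConnAux l (plen p) p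

/-- the node `(i+1, λ_{i+1})` (in row `i+1`, 1-indexed) is a removable node. -/
def Removable (p : ℕ → ℕ) (i : ℕ) : Prop := p (i + 1) < p i

/-- removal of the removable node in row `i+1`. -/
def removeNode (p : ℕ → ℕ) (i : ℕ) : ℕ → ℕ := fun k => if k = i then p i - 1 else p k

/-- there is an addable node `(i+1, λ_{i+1} + 1)` in row `i+1` (1-indexed). -/
def Addable (p : ℕ → ℕ) (i : ℕ) : Prop := i ≤ plen p ∧ (i = 0 ∨ p i < p (i - 1))

/-- the removable node in row `i+1` is suitable: its residue (mod `l`) differs from the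
residue of every lower addable node. -/
def Suitable (l : ℕ) (p : ℕ → ℕ) (i : ℕ) : Prop :=
  Removable p i ∧ ∀ j, i < j → Addable p j →
    ¬ ((p j : ℤ) - (j : ℤ) ≡ (p i : ℤ) - (i : ℤ) - 1 [ZMOD (l : ℤ)])

/-- the removable node in row `i+1` is co-suitable: its transpose node is a suitable
node of the transpose partition. -/
def CoSuitable (l : ℕ) (p : ℕ → ℕ) (i : ℕ) : Prop :=
  Removable p i ∧ Suitable l (conjP p) (p i - 1)

/-- `Φ_m`: partitions with at most `m` parts and `λ_1 - λ_m ≤ l - m`. -/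
def Phi (l m : ℕ) : Set (ℕ → ℕ) :=
  {p | IsPartition p ∧ plen p ≤ m ∧ p 0 - p (m - 1) ≤ l - m}

/-- `λ` is `m`-distinguished: `λ = λ⁰ + lλ̄` with
`λ⁰ = ((l-m)^k, a_1, …, a_m)`, `l - m > a_1 ≥ … ≥ a_m ≥ 0`, and `λ̄` a partition with
`λ̄_1 ≤ m - 1`. -/
def IsDistinguished (l m : ℕ) (p : ℕ → ℕ) : Prop :=
  ∃ (k : ℕ) (a : ℕ → ℕ) (pb : ℕ → ℕ),
    IsPartition pb ∧ pb 0 < m ∧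
    (∀ i j, i ≤ j → a j ≤ a i) ∧ a 0 < l - m ∧ (∀ i, m ≤ i → a i = 0) ∧
    ∀ i, p i = (if i < k then l - m else a (i - k)) + l * pb i

/-- `q` is obtained from `p` by removing a skew `l`-hook (spanning rows `a+1, …, b+1`,
1-indexed). -/
def IsHookRemoval (l : ℕ) (p q : ℕ → ℕ) : Prop :=
  IsPartition q ∧ ∃ a b : ℕ, a ≤ b ∧
    (∀ i, i < a → q i = p i) ∧
    (∀ i, a ≤ i → i < b → q i + 1 = p (i + 1)) ∧
    q b + l = p a + (b - a) ∧
    ∀ i, b < i → q i = p i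

/-- `q` is the `l`-core of `p`: obtained by repeatedly removing skew `l`-hooks until
none remain. -/
def IsCoreOf (l : ℕ) (p q : ℕ → ℕ) : Prop :=
  Relation.ReflTransGen (fun x y => IsHookRemoval l x y) p q ∧ ∀ r, ¬ IsHookRemoval l q r

/-- the `l`-core of `p`. -/
def lCore (l : ℕ) (p : ℕ → ℕ) : ℕ → ℕ := Classical.epsilon (IsCoreOf l p)


/-! ### Basic facts on partitions -/

/-- dropping the first `h` rows -/
def dr (p : ℕ → ℕ) (h : ℕ) : ℕ → ℕ := fun j => p (j + h)

theorem dr_apply (p : ℕ → ℕ) (h j : ℕ) : dr p h j = p (j + h) := rfl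

theorem dr_dr (p : ℕ → ℕ) (a b : ℕ) : dr (dr p a) b = dr p (a + b) := by
  funext j; simp only [dr]; congr 1; omega

theorem dr_zero (p : ℕ → ℕ) : dr p 0 = p := rfl

theorem IsPartition.dr {p : ℕ → ℕ} (hp : IsPartition p) (h : ℕ) : IsPartition (dr p h) := by
  obtain ⟨h1, N, hN⟩ := hp
  exact ⟨fun i j hij => h1 _ _ (by omega), N, fun i hi => hN _ (by omega)⟩

theorem IsLRegular.dr {l : ℕ} (hl : 2 ≤ l) {p : ℕ → ℕ} (hp : IsLRegular l p) (h : ℕ) :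
    IsLRegular l (dr p h) := by
  intro i hi
  have := hp (i + h) hi
  simp only [dr_apply]
  rwa [show i + l - 1 + h = i + h + l - 1 by omega]

theorem plen_spec {p : ℕ → ℕ} (hp : IsPartition p) : p (plen p) = 0 := by
  obtain ⟨h1, N, hN⟩ := hp
  exact Nat.sInf_mem (s := {N | p N = 0}) ⟨N, hN N le_rfl⟩

theorem plen_le {p : ℕ → ℕ} {n : ℕ} (h : p n = 0) : plen p ≤ n :=
  Nat.sInf_le (s := {N | p N = 0}) h

theorem plen_le_iff {p : ℕ → ℕ} (hp : IsPartition p) (n : ℕ) : plen p ≤ n ↔ p n = 0 := by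
  constructor
  · intro h
    have := hp.1 _ _ h
    rw [plen_spec hp] at this
    omega
  · exact plen_le

theorem lt_plen_iff {p : ℕ → ℕ} (hp : IsPartition p) (n : ℕ) : n < plen p ↔ p n ≠ 0 := by
  rw [← not_le, plen_le_iff hp]

theorem plen_eq {p : ℕ → ℕ} (hp : IsPartition p) {n : ℕ} (h0 : p n = 0)
    (h1 : ∀ i, i < n → p i ≠ 0) : plen p = n := by
  apply le_antisymm (plen_le h0)
  by_contra h
  exact h1 _ (not_le.mp h) (plen_spec hp)

theorem plen_dr {p : ℕ → ℕ} (hp : IsPartition p) (h : ℕ) : plen (dr p h) = plen p - h := by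
  apply plen_eq (hp.dr h)
  · rw [dr_apply, ← plen_le_iff hp]; omega
  · intro i hi
    rw [dr_apply, ← lt_plen_iff hp]; omega

theorem eq_zero_of_zero {p : ℕ → ℕ} (hp : IsPartition p) (h : p 0 = 0) : p = fun _ => 0 := by
  funext i
  have := hp.1 0 i (by omega)
  omega

theorem isPartition_zero : IsPartition (fun _ => 0) := ⟨fun _ _ _ => le_rfl, 0, fun _ _ => rfl⟩

theorem plen_zero : plen (fun _ => 0) = 0 := by
  have := plen_le (p := fun _ => 0) (n := 0) rfl
  omega

theorem pdeg_eq {p : ℕ → ℕ} (hp : IsPartition p) {M : ℕ} (h : plen p ≤ M) :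
    pdeg p = ∑ i ∈ Finset.range M, p i := by
  unfold pdeg
  apply Finset.sum_subset
  · intro x; simp only [Finset.mem_range]; omega
  · intro x _ hx
    simp only [Finset.mem_range, not_lt] at hx
    exact (plen_le_iff hp x).mp hx

/-! ### `firstSeg` -/

theorem firstSeg_spec {l : ℕ} (hl : 2 ≤ l) (p : ℕ → ℕ) :
    1 ≤ firstSeg l p ∧ l ≤ p 0 - p (firstSeg l p) + firstSeg l p :=
  Nat.sInf_mem (s := {h | 1 ≤ h ∧ l ≤ p 0 - p h + h}) ⟨l, by omega, by omega⟩

theorem firstSeg_le {l : ℕ} {p : ℕ → ℕ} {h : ℕ} (h1 : 1 ≤ h) (h2 : l ≤ p 0 - p h + h) :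
    firstSeg l p ≤ h :=
  Nat.sInf_le (s := {h | 1 ≤ h ∧ l ≤ p 0 - p h + h}) ⟨h1, h2⟩

theorem firstSeg_le_l {l : ℕ} (hl : 2 ≤ l) (p : ℕ → ℕ) : firstSeg l p ≤ l :=
  firstSeg_le (by omega) (by omega)

theorem firstSeg_min {l : ℕ} {p : ℕ → ℕ} {h : ℕ} (h1 : 1 ≤ h) (h2 : h < firstSeg l p) :
    p 0 - p h + h < l := by
  by_contra hc
  have := firstSeg_le h1 (not_lt.mp hc)
  omega

theorem firstSeg_eq {l : ℕ} {p : ℕ → ℕ} {h : ℕ} (h1 : 1 ≤ h) (h2 : l ≤ p 0 - p h + h)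
    (h3 : ∀ i, 1 ≤ i → i < h → p 0 - p i + i < l) (hl : 2 ≤ l) : firstSeg l p = h := by
  apply le_antisymm (firstSeg_le h1 h2)
  by_contra hc
  have a := firstSeg_spec hl p
  have b := h3 _ a.1 (not_le.mp hc)
  omega

theorem firstSeg_last {l : ℕ} (hl : 2 ≤ l) (p : ℕ → ℕ) (hp : IsPartition p) :
    p 0 + firstSeg l p ≤ l + p (firstSeg l p - 1) := by
  have a := firstSeg_spec hl p
  have c := hp.1 0 (firstSeg l p - 1) (by omega)
  by_cases h : firstSeg l p = 1
  · rw [h]; simp only [Nat.sub_self]; omega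
  · have b := firstSeg_min (l := l) (p := p) (h := firstSeg l p - 1) (by omega) (by omega)
    omega

theorem firstSeg_lt {l : ℕ} (hl : 2 ≤ l) {p : ℕ → ℕ} (hp : IsPartition p) (hr : IsLRegular l p)
    (h0 : p 0 ≠ 0) : firstSeg l p < l := by
  have := hr 0 h0
  rw [show 0 + l - 1 = l - 1 by omega] at this
  have h2 := hp.1 0 (l - 1) (by omega)
  have := firstSeg_le (l := l) (p := p) (h := l - 1) (by omega) (by omega)
  omega

/-! ### `removeLEdge` -/

theorem removeLEdgeAux_zero (l n : ℕ) (p : ℕ → ℕ) (h : p 0 = 0) :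
    removeLEdgeAux l n p = fun _ => 0 := by
  cases n <;> simp [removeLEdgeAux, h]

theorem removeLEdge_of_zero (l : ℕ) (p : ℕ → ℕ) (h : p 0 = 0) :
    removeLEdge l p = fun _ => 0 := removeLEdgeAux_zero _ _ _ h

theorem removeLEdgeAux_fuel {l : ℕ} (hl : 2 ≤ l) : ∀ (n m : ℕ) (p : ℕ → ℕ), IsPartition p →
    plen p ≤ n → plen p ≤ m → removeLEdgeAux l n p = removeLEdgeAux l m p := by
  intro n
  induction n with
  | zero =>
    intro m p hp h1 _
    have h0 : p 0 = 0 := (plen_le_iff hp 0).mp h1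
    rw [removeLEdgeAux_zero _ _ _ h0, removeLEdgeAux_zero _ _ _ h0]
  | succ n ih =>
    intro m p hp h1 h2
    by_cases h0 : p 0 = 0
    · rw [removeLEdgeAux_zero _ _ _ h0, removeLEdgeAux_zero _ _ _ h0]
    have hpl := (lt_plen_iff hp 0).mpr h0
    obtain ⟨m, rfl⟩ : ∃ k, m = k + 1 := ⟨m - 1, by omega⟩
    have hs := (firstSeg_spec hl p).1
    have hd := plen_dr hp (firstSeg l p)
    have := ih m (dr p (firstSeg l p)) (hp.dr _) (by omega) (by omega)
    unfold dr at this
    simp only [removeLEdgeAux, this]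

/-- uniform recursion for the removal of the `l`-edge -/
theorem removeLEdge_rec {l : ℕ} (hl : 2 ≤ l) {p : ℕ → ℕ} (hp : IsPartition p) (i : ℕ) :
    removeLEdge l p i =
      if i + 1 < firstSeg l p then p (i + 1) - 1
      else if i + 1 = firstSeg l p then p 0 + firstSeg l p - 1 - l
      else removeLEdge l (dr p (firstSeg l p)) (i - firstSeg l p) := by
  have hs := firstSeg_spec hl p
  have hll := firstSeg_le_l hl p
  by_cases h0 : p 0 = 0
  · have hz := eq_zero_of_zero hp h0
    rw [removeLEdge_of_zero l p h0, removeLEdge_of_zero l (dr p _) (by rw [dr_apply, hz])]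
    have := congrFun hz (i + 1)
    beta_reduce at this ⊢
    split_ifs <;> omega
  have hpl := (lt_plen_iff hp 0).mpr h0
  by_cases he : p 0 + plen p - 1 ≤ l
  · have hle : plen p ≤ firstSeg l p := by
      by_contra hc
      have a := (lt_plen_iff hp (firstSeg l p)).mp (not_le.mp hc)
      omega
    have h1 : removeLEdge l p i = p (i + 1) - 1 := by
      unfold removeLEdge
      obtain ⟨n, hn⟩ : ∃ n, plen p = n + 1 := ⟨plen p - 1, by omega⟩
      rw [show removeLEdgeAux l (plen p) p = removeLEdgeAux l (n + 1) p by rw [hn]]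
      simp only [removeLEdgeAux, if_neg h0, if_pos he]
    have hz0 := (plen_le_iff hp (firstSeg l p)).mp hle
    rw [h1, removeLEdge_of_zero l (dr p _) (by rw [dr_apply, zero_add]; exact hz0)]
    split_ifs with c1 c2
    · rfl
    · rw [c2, hz0]
      rcases Nat.eq_or_lt_of_le hle with hq | hq
      · omega
      · have := firstSeg_min (l := l) (p := p) (h := plen p) (by omega) hq
        have := firstSeg_last hl p hp
        have hz1 := (plen_le_iff hp (firstSeg l p - 1)).mp (by omega)
        omega
    · have := (plen_le_iff hp (i + 1)).mp (by omega)
      beta_reduce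
      omega
  · unfold removeLEdge
    obtain ⟨n, hn⟩ : ∃ n, plen p = n + 1 := ⟨plen p - 1, by omega⟩
    rw [show removeLEdgeAux l (plen p) p = removeLEdgeAux l (n + 1) p by rw [hn]]
    have hd := plen_dr hp (firstSeg l p)
    have := removeLEdgeAux_fuel hl n (plen (dr p (firstSeg l p))) (dr p (firstSeg l p)) (hp.dr _)
      (by omega) le_rfl
    rw [← this]
    simp only [removeLEdgeAux, if_neg h0, if_neg he]
    rfl

/-- removal commutes with dropping the first segment -/
theorem removeLEdge_dr {l : ℕ} (hl : 2 ≤ l) {p : ℕ → ℕ} (hp : IsPartition p) :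
    dr (removeLEdge l p) (firstSeg l p) = removeLEdge l (dr p (firstSeg l p)) := by
  funext i
  rw [dr_apply, removeLEdge_rec hl hp, if_neg (by omega), if_neg (by omega)]
  congr 1; omega

/-- induction along segments -/
theorem seg_induction {l : ℕ} (hl : 2 ≤ l) (P : (ℕ → ℕ) → Prop)
    (hz : P (fun _ => 0))
    (hs : ∀ p, IsPartition p → p 0 ≠ 0 → P (dr p (firstSeg l p)) → P p) :
    ∀ p, IsPartition p → P p := by
  have key : ∀ (n : ℕ) (p : ℕ → ℕ), IsPartition p → plen p ≤ n → P p := by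
    intro n
    induction n with
    | zero =>
      intro p hp h
      rw [eq_zero_of_zero hp ((plen_le_iff hp 0).mp h)]; exact hz
    | succ n ih =>
      intro p hp h
      by_cases h0 : p 0 = 0
      · rw [eq_zero_of_zero hp h0]; exact hz
      · have := (firstSeg_spec hl p).1
        exact hs p hp h0 (ih _ (hp.dr _) (by rw [plen_dr hp]; omega))
  exact fun p hp => key _ p hp le_rfl

/-- lower bound -/
theorem remove_lower {l : ℕ} (hl : 2 ≤ l) : ∀ p, IsPartition p →
    ∀ i, p (i + 1) ≤ removeLEdge l p i + 1 := by
  apply seg_induction hl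
  · intro i; exact Nat.zero_le _
  · intro p hp h0 ih i
    have hs := firstSeg_spec hl p
    have := hp.1 0 (firstSeg l p) (by omega)
    rw [removeLEdge_rec hl hp]
    split_ifs with c1 c2
    · omega
    · rw [c2]; omega
    · have := ih (i - firstSeg l p)
      rw [dr_apply] at this
      rwa [show i - firstSeg l p + 1 + firstSeg l p = i + 1 by omega] at this

/-- upper bound -/
theorem remove_upper {l : ℕ} (hl : 2 ≤ l) : ∀ p, IsPartition p →
    ∀ i, removeLEdge l p i ≤ p i - 1 := by
  apply seg_induction hl
  · intro i; rw [removeLEdge_of_zero l _ rfl]; exact Nat.zero_le _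
  · intro p hp h0 ih i
    have hs := firstSeg_spec hl p
    have hla := firstSeg_last hl p hp
    rw [removeLEdge_rec hl hp]
    split_ifs with c1 c2
    · have := hp.1 i (i + 1) (by omega)
      omega
    · rw [← c2] at hla ⊢
      simp only [Nat.add_sub_cancel] at hla ⊢
      omega
    · have := ih (i - firstSeg l p)
      rw [dr_apply] at this
      rwa [show i - firstSeg l p + firstSeg l p = i by omega] at this

theorem remove_antitone {l : ℕ} (hl : 2 ≤ l) : ∀ p, IsPartition p →
    ∀ i, removeLEdge l p (i + 1) ≤ removeLEdge l p i := by
  apply seg_induction hl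
  · intro i; rw [removeLEdge_of_zero l _ rfl]
  · intro p hp h0 ih i
    have hs := firstSeg_spec hl p
    have hla := firstSeg_last hl p hp
    have low := remove_lower hl p hp i
    have up := remove_upper hl p hp (i + 1)
    by_cases c1 : i + 1 < firstSeg l p
    · have e1 := removeLEdge_rec hl hp i
      rw [if_pos c1] at e1
      omega
    by_cases c2 : i + 1 = firstSeg l p
    · omega
    · have := ih (i - firstSeg l p)
      rw [← removeLEdge_dr hl hp, dr_apply, dr_apply] at this
      rwa [show i - firstSeg l p + firstSeg l p = i by omega,
        show i - firstSeg l p + 1 + firstSeg l p = i + 1 by omega] at this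

theorem remove_isPartition {l : ℕ} (hl : 2 ≤ l) {p : ℕ → ℕ} (hp : IsPartition p) :
    IsPartition (removeLEdge l p) := by
  refine ⟨fun i j hij => antitone_nat_of_succ_le (remove_antitone hl p hp) hij, ?_⟩
  obtain ⟨N, hN⟩ := hp.2
  refine ⟨N, fun i hi => ?_⟩
  have := remove_upper hl p hp i
  rw [hN i hi] at this
  omega

theorem remove_regular {l : ℕ} (hl : 2 ≤ l) : ∀ p, IsPartition p →
    IsLRegular l p → IsLRegular l (removeLEdge l p) := by
  apply seg_induction hl
  · intro _ i; rw [removeLEdge_of_zero l _ rfl]; intro h; exact absurd rfl h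
  · intro p hp h0 ih hr i hi heq
    have ih := ih (hr.dr hl _)
    have hs := firstSeg_spec hl p
    have hlt := firstSeg_lt hl hp hr h0
    have hnu := remove_isPartition hl hp
    by_cases c : firstSeg l p ≤ i
    · have h1 := ih (i - firstSeg l p)
      rw [← removeLEdge_dr hl hp, dr_apply, dr_apply] at h1
      rw [show i - firstSeg l p + firstSeg l p = i by omega,
        show i - firstSeg l p + l - 1 + firstSeg l p = i + l - 1 by omega] at h1
      exact h1 hi heq
    · push Not at c
      set h := firstSeg l p with hh
      set v := removeLEdge l p i with hv
      have hq : IsPartition (dr p h) := hp.dr h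
      have l1 := remove_lower hl p hp i
      have l2 := remove_lower hl p hp (h - 1)
      have l3 : removeLEdge l p (h - 1) ≤ v := hnu.1 _ _ (by omega)
      rw [show h - 1 + 1 = h by omega] at l2
      have e : removeLEdge l (dr p h) (i + l - 1 - h) = v := by
        rw [hh, ← removeLEdge_dr hl hp, ← hh, dr_apply,
          show i + l - 1 - h + h = i + l - 1 by omega, heq]
      have hq0 : dr p h 0 ≠ 0 := by
        intro hc
        rw [removeLEdge_of_zero l _ hc] at e
        exact hi e.symm
      have hlt2 := firstSeg_lt hl hq (hr.dr hl _) hq0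
      have hs2 := firstSeg_spec hl (dr p h)
      have hdr0 : dr p h 0 = p h := by rw [dr_apply, zero_add]
      have hgt : i + l - h < firstSeg l (dr p h) := by
        by_contra hc
        push Not at hc
        have r := removeLEdge_rec hl hq (firstSeg l (dr p h) - 1)
        rw [if_neg (by omega), if_pos (by omega)] at r
        have := (remove_isPartition hl hq).1 (firstSeg l (dr p h) - 1) (i + l - 1 - h) (by omega)
        omega
      have r := removeLEdge_rec hl hq (i + l - 1 - h)
      rw [if_pos (by omega), dr_apply, e,
        show i + l - 1 - h + 1 + h = i + l by omega] at r
      have m := hp.1 (i + 1) (i + l) (by omega)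
      have := hr (i + 1) (by omega)
      rw [show i + 1 + l - 1 = i + l by omega] at this
      omega

theorem remove_pdeg {l : ℕ} (hl : 2 ≤ l) {p : ℕ → ℕ} (hp : IsPartition p) :
    pdeg (removeLEdge l p) + plen p ≤ pdeg p := by
  have h1 : plen (removeLEdge l p) ≤ plen p := by
    rw [plen_le_iff (remove_isPartition hl hp)]
    have := remove_upper hl p hp (plen p)
    rw [plen_spec hp] at this
    omega
  rw [pdeg_eq (remove_isPartition hl hp) h1, pdeg]
  have : plen p = ∑ i ∈ Finset.range (plen p), 1 := by simp
  nth_rewrite 2 [this]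
  rw [← Finset.sum_add_distrib]
  apply Finset.sum_le_sum
  intro i hi
  have := remove_upper hl p hp i
  have := (lt_plen_iff hp i).mp (Finset.mem_range.mp hi)
  omega

/-! ### The recursion for `mullLen` -/

theorem pdeg_split {p : ℕ → ℕ} (hp : IsPartition p) (h : ℕ) :
    pdeg p = ∑ i ∈ Finset.range h, p i + pdeg (dr p h) := by
  rw [pdeg_eq hp (M := h + plen p) (by omega), Finset.sum_range_add,
    pdeg_eq (hp.dr h) (M := plen p) (by rw [plen_dr hp]; omega)]
  congr 1
  apply Finset.sum_congr rfl
  intro i _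
  rw [dr_apply, add_comm]

theorem sum_shift (p : ℕ → ℕ) (g : ℕ) (h : ∀ i, i < g → p (i + 1) ≠ 0) :
    ∑ i ∈ Finset.range g, p (i + 1) = ∑ i ∈ Finset.range g, (p (i + 1) - 1) + g := by
  have : g = ∑ i ∈ Finset.range g, 1 := by simp
  nth_rewrite 3 [this]
  rw [← Finset.sum_add_distrib]
  apply Finset.sum_congr rfl
  intro i hi
  have := h i (Finset.mem_range.mp hi)
  omega

theorem elen_add {l : ℕ} (hl : 2 ≤ l) {p : ℕ → ℕ} (hp : IsPartition p) :
    elen l p + pdeg (removeLEdge l p) = pdeg p ∧ plen p ≤ elen l p := by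
  have := remove_pdeg hl hp
  unfold elen
  omega

theorem mullLen_zero (l : ℕ) : mullLen l (fun _ => 0) = 0 := by
  have : elen l (fun _ => 0) = 0 := by
    unfold elen pdeg
    simp
  unfold mullLen
  rw [this]
  simp

theorem elen_big {l : ℕ} (hl : 2 ≤ l) {p : ℕ → ℕ} (hp : IsPartition p) (h0 : p 0 ≠ 0)
    (he : l ≤ p 0 + plen p - 1) :
    firstSeg l p ≤ plen p ∧ elen l p = l + elen l (dr p (firstSeg l p)) := by
  have hs := firstSeg_spec hl p
  have hpl := (lt_plen_iff hp 0).mpr h0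
  have hle : firstSeg l p ≤ plen p := by
    apply firstSeg_le (by omega)
    rw [plen_spec hp]; omega
  refine ⟨hle, ?_⟩
  have a1 := (elen_add hl hp).1
  have a2 := (elen_add hl (hp.dr (firstSeg l p))).1
  have s1 := pdeg_split hp (firstSeg l p)
  have s2 := pdeg_split (remove_isPartition hl hp) (firstSeg l p)
  rw [removeLEdge_dr hl hp] at s2
  suffices h : ∑ i ∈ Finset.range (firstSeg l p), p i =
      ∑ i ∈ Finset.range (firstSeg l p), removeLEdge l p i + l by omega
  have hbig : l ≤ p 0 + firstSeg l p - 1 := by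
    by_cases hz : p (firstSeg l p) = 0
    · have := (plen_le_iff hp _).mpr hz
      omega
    · have := hp.1 0 (firstSeg l p) (by omega)
      omega
  have e2 : removeLEdge l p (firstSeg l p - 1) = p 0 + firstSeg l p - 1 - l := by
    rw [removeLEdge_rec hl hp, if_neg (by omega), if_pos (by omega)]
  obtain ⟨g, hg⟩ : ∃ g, firstSeg l p = g + 1 := ⟨firstSeg l p - 1, by omega⟩
  have e1 : ∑ i ∈ Finset.range g, removeLEdge l p i = ∑ i ∈ Finset.range g, (p (i + 1) - 1) := by
    apply Finset.sum_congr rfl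
    intro i hi
    rw [removeLEdge_rec hl hp, if_pos (by have := Finset.mem_range.mp hi; omega)]
  have e3 := sum_shift p g (fun i hi => (lt_plen_iff hp _).mp (by omega))
  rw [hg] at e2 ⊢
  rw [Finset.sum_range_succ', Finset.sum_range_succ, e1]
  simp only [Nat.add_sub_cancel] at e2
  omega

theorem elen_small {l : ℕ} (hl : 2 ≤ l) {p : ℕ → ℕ} (hp : IsPartition p) (h0 : p 0 ≠ 0)
    (he : p 0 + plen p - 1 < l) :
    firstSeg l p + p 0 = l ∧ plen p ≤ firstSeg l p ∧ elen l p = p 0 + plen p - 1 := by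
  have hpl := (lt_plen_iff hp 0).mpr h0
  have hf : firstSeg l p = l - p 0 := by
    have hz := (plen_le_iff hp (l - p 0)).mp (by omega)
    apply firstSeg_eq (by omega) (by rw [hz]; omega) _ hl
    intro i _ _
    omega
  refine ⟨by omega, by omega, ?_⟩
  have a1 := (elen_add hl hp).1
  obtain ⟨g, hg⟩ : ∃ g, plen p = g + 1 := ⟨plen p - 1, by omega⟩
  have hz : ∀ i, removeLEdge l p i = p (i + 1) - 1 := by
    intro i
    by_cases c1 : i + 1 < firstSeg l p
    · rw [removeLEdge_rec hl hp, if_pos c1]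
    · have up := remove_upper hl p hp i
      have z1 := (plen_le_iff hp (i + 1)).mp (by omega)
      by_cases c2 : i + 1 = firstSeg l p
      · rw [removeLEdge_rec hl hp, if_neg c1, if_pos c2]
        omega
      · have z1 := (plen_le_iff hp i).mp (by omega)
        omega
  have zl := (plen_le_iff hp (g + 1)).mp (by omega)
  have h1 : plen (removeLEdge l p) ≤ g := by
    apply plen_le
    rw [hz, zl]
  rw [pdeg_eq (remove_isPartition hl hp) h1, pdeg_eq hp (M := g + 1) (by omega),
    Finset.sum_range_succ', sum_shift p g (fun i hi => (lt_plen_iff hp _).mp (by omega)),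
    Finset.sum_congr rfl (fun i _ => hz i)] at a1
  omega

theorem mullLen_rec {l : ℕ} (hl : 2 ≤ l) {p : ℕ → ℕ} (hp : IsPartition p) :
    mullLen l p + firstSeg l p = l + mullLen l (dr p (firstSeg l p)) := by
  by_cases h0 : p 0 = 0
  · have hz := eq_zero_of_zero hp h0
    have hd : dr p (firstSeg l p) = fun _ => 0 := by rw [hz]; rfl
    have hf : firstSeg l p = l := by
      apply firstSeg_eq (by omega) (by omega) _ hl
      intro i _ _; omega
    rw [hd, hf, hz, mullLen_zero]; omega
  have hf := firstSeg_le_l hl p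
  by_cases he : l ≤ p 0 + plen p - 1
  · obtain ⟨h1, h2⟩ := elen_big hl hp h0 he
    have h3 := (elen_add hl (hp.dr (firstSeg l p))).2
    have h4 := plen_dr hp (firstSeg l p)
    unfold mullLen
    rw [h2]
    simp only [Nat.dvd_add_right (dvd_refl l)]
    split_ifs <;> omega
  · obtain ⟨h1, h2, h3⟩ := elen_small hl hp h0 (by omega)
    have hpl := (lt_plen_iff hp 0).mpr h0
    have hd : dr p (firstSeg l p) = fun _ => 0 :=
      eq_zero_of_zero (hp.dr _) (by rw [dr_apply, zero_add]; exact (plen_le_iff hp _).mp h2)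
    rw [hd, mullLen_zero]
    unfold mullLen
    rw [if_neg (by intro hdv; have := Nat.le_of_dvd (by omega) hdv; omega)]
    omega

theorem mullLen_pos {l : ℕ} (hl : 2 ≤ l) {p : ℕ → ℕ} (hp : IsPartition p) (hr : IsLRegular l p)
    (h0 : p 0 ≠ 0) : 1 ≤ mullLen l p := by
  have := mullLen_rec hl hp
  have := firstSeg_lt hl hp hr h0
  omega

/-! ### The start of the next segment -/

/-- the row in which the next segment starts -/
def nxt (l : ℕ) (q : ℕ → ℕ) (b : ℕ) : ℕ := b + firstSeg l (dr q b)

theorem nxt_spec {l : ℕ} (hl : 2 ≤ l) {q : ℕ → ℕ} (hq : IsPartition q) (b : ℕ) :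
    b < nxt l q b ∧ nxt l q b ≤ b + l ∧ l + q (nxt l q b) + b ≤ q b + nxt l q b := by
  have h1 := firstSeg_spec hl (dr q b)
  have h2 := firstSeg_le_l hl (dr q b)
  have h3 := hq.1 b (b + firstSeg l (dr q b)) (by omega)
  unfold nxt
  rw [dr_apply, dr_apply, zero_add, add_comm _ b] at h1
  omega

theorem nxt_le {l : ℕ} {q : ℕ → ℕ} {b j : ℕ} (hj : b < j)
    (h : l + q j + b ≤ q b + j) : nxt l q b ≤ j := by
  have := firstSeg_le (l := l) (p := dr q b) (h := j - b) (by omega) (by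
    rw [dr_apply, dr_apply, zero_add, show j - b + b = j by omega]; omega)
  unfold nxt
  omega

theorem nxt_mono {l : ℕ} (hl : 2 ≤ l) {q : ℕ → ℕ} (hq : IsPartition q) {b c : ℕ} (h : b ≤ c) :
    nxt l q b ≤ nxt l q c := by
  have h1 := nxt_spec hl hq c
  have h2 := hq.1 b c h
  exact nxt_le (by omega) (by omega)

theorem nxt_zero {l : ℕ} (hl : 2 ≤ l) {q : ℕ → ℕ} (hq : IsPartition q) {b : ℕ} (h : q b = 0) :
    nxt l q b = b + l := by
  have h1 := nxt_spec hl hq b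
  omega

/-- starting rows of the segments -/
def bseq (l : ℕ) (q : ℕ → ℕ) (T : ℕ) : ℕ := (nxt l q)^[T] 0

theorem bseq_succ (l : ℕ) (q : ℕ → ℕ) (T : ℕ) : bseq l q (T + 1) = nxt l q (bseq l q T) :=
  Function.iterate_succ_apply' _ _ _

theorem le_bseq {l : ℕ} (hl : 2 ≤ l) {q : ℕ → ℕ} (hq : IsPartition q) (T : ℕ) :
    T ≤ bseq l q T := by
  induction T with
  | zero => omega
  | succ T ih =>
    rw [bseq_succ]
    have := (nxt_spec hl hq (bseq l q T)).1
    omega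

theorem mullLen_iter {l : ℕ} (hl : 2 ≤ l) {q : ℕ → ℕ} (hq : IsPartition q) (T : ℕ) :
    mullLen l q + bseq l q T = l * T + mullLen l (dr q (bseq l q T)) := by
  induction T with
  | zero => simp [bseq, dr_zero]
  | succ T ih =>
    rw [bseq_succ]
    have h1 := mullLen_rec hl (hq.dr (bseq l q T))
    rw [dr_dr] at h1
    unfold nxt
    rw [mul_add]
    omega

theorem mullLen_bseq {l : ℕ} (hl : 2 ≤ l) {q : ℕ → ℕ} (hq : IsPartition q) (T : ℕ)
    (h : q (bseq l q T) = 0) : mullLen l q + bseq l q T = l * T := by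
  rw [mullLen_iter hl hq, eq_zero_of_zero (hq.dr _) (by rw [dr_apply, zero_add]; exact h),
    mullLen_zero, add_zero]

theorem remove_dr_bseq {l : ℕ} (hl : 2 ≤ l) {q : ℕ → ℕ} (hq : IsPartition q) (T : ℕ) :
    dr (removeLEdge l q) (bseq l q T) = removeLEdge l (dr q (bseq l q T)) := by
  induction T with
  | zero => rfl
  | succ T ih =>
    rw [bseq_succ]
    unfold nxt
    rw [← dr_dr, ih, removeLEdge_dr hl (hq.dr _), dr_dr]

theorem remove_end {l : ℕ} (hl : 2 ≤ l) {q : ℕ → ℕ} (hq : IsPartition q) (T : ℕ) :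
    removeLEdge l q (bseq l q (T + 1) - 1) =
      q (bseq l q T) + (bseq l q (T + 1) - bseq l q T) - 1 - l := by
  have h1 := congrFun (remove_dr_bseq hl hq T) (firstSeg l (dr q (bseq l q T)) - 1)
  have h2 := (firstSeg_spec hl (dr q (bseq l q T))).1
  rw [removeLEdge_rec hl (hq.dr _), if_neg (by omega), if_pos (by omega), dr_apply, dr_apply,
    zero_add] at h1
  rw [bseq_succ]
  unfold nxt
  rw [show bseq l q T + firstSeg l (dr q (bseq l q T)) - 1 =
    firstSeg l (dr q (bseq l q T)) - 1 + bseq l q T by omega, h1]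
  congr 2
  omega

theorem interlace {l : ℕ} (hl : 2 ≤ l) {q : ℕ → ℕ} (hq : IsPartition q) (T : ℕ) :
    bseq l q T ≤ bseq l (removeLEdge l q) T ∧
      (bseq l (removeLEdge l q) T < bseq l q (T + 1) ∨
        (bseq l (removeLEdge l q) T = bseq l q (T + 1) ∧ q (bseq l q (T + 1)) = 0)) := by
  have hn := remove_isPartition hl hq
  induction T with
  | zero =>
    have h1 := (nxt_spec hl hq 0).1
    refine ⟨le_rfl, Or.inl ?_⟩
    rw [bseq_succ]
    exact h1
  | succ T ih =>
    obtain ⟨ih1, ih2⟩ := ih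
    have e1 := remove_end hl hq T
    have e2 := remove_end hl hq (T + 1)
    have b1 := nxt_spec hl hq (bseq l q T)
    have b2 := nxt_spec hl hq (bseq l q (T + 1))
    have z1 := nxt_zero hl hq (b := bseq l q T)
    have z2 := nxt_zero hl hq (b := bseq l q (T + 1))
    rw [← bseq_succ] at b1 b2 z1 z2
    rw [bseq_succ l (removeLEdge l q)]
    set ν := removeLEdge l q with hν
    set b := bseq l q T
    set b' := bseq l q (T + 1)
    set b'' := bseq l q (T + 1 + 1)
    set c := bseq l ν T
    constructor
    · refine le_trans ?_ (nxt_mono hl hn ih1)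
      have up := remove_upper hl q hq b
      rw [← hν] at up
      by_cases hz : q b = 0
      · rw [nxt_zero hl hn (by omega), z1 hz]
      · by_contra hc
        push Not at hc
        have s := nxt_spec hl hn b
        have m := hn.1 (nxt l ν b) (b' - 1) (by omega)
        omega
    · rcases ih2 with hc | ⟨hc, hz⟩
      · have m := hn.1 c (b' - 1) (by omega)
        have low := remove_lower hl q hq (b' - 1)
        rw [← hν, show b' - 1 + 1 = b' by omega] at low
        by_cases ht : l ≤ q b' + (b'' - b') - 1
        · left
          have := nxt_le (l := l) (q := ν) (b := c) (j := b'' - 1) (by omega) (by omega)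
          omega
        · have hz : q b'' = 0 := by omega
          have up := remove_upper hl q hq b''
          rw [← hν] at up
          have := nxt_le (l := l) (q := ν) (b := c) (j := b'') (by omega) (by omega)
          omega
      · right
        have up := remove_upper hl q hq b'
        rw [← hν] at up
        have := nxt_zero hl hn (b := c) (by rw [hc]; omega)
        have := z2 hz
        have := hq.1 b' b'' (by omega)
        omega

theorem mullLen_remove {l : ℕ} (hl : 2 ≤ l) {q : ℕ → ℕ} (hq : IsPartition q) :
    mullLen l (removeLEdge l q) ≤ mullLen l q ∧
      mullLen l q ≤ mullLen l (removeLEdge l q) + l := by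
  have hn := remove_isPartition hl hq
  set T := plen q with hT
  have h1 := le_bseq hl hq T
  have h2 := interlace hl hq T
  have z1 : q (bseq l q T) = 0 := (plen_le_iff hq _).mp h1
  have up := remove_upper hl q hq (bseq l (removeLEdge l q) T)
  have m := hq.1 _ _ h2.1
  have z2 := nxt_zero hl hq z1
  rw [← bseq_succ] at z2
  have f1 := mullLen_bseq hl hq T z1
  have f2 := mullLen_bseq hl hn T (by omega)
  omega

/-! ### Adding an `l`-edge -/

theorem add_base {l : ℕ} (hl : 2 ≤ l) (d : ℕ) (hd : d ≤ l) :
    ∃ μ, IsPartition μ ∧ IsLRegular l μ ∧ removeLEdge l μ = (fun _ => 0) ∧ plen μ = d := by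
  by_cases h0 : d = 0
  · subst h0
    exact ⟨fun _ => 0, isPartition_zero, fun i hi => absurd rfl hi, removeLEdge_of_zero _ _ rfl,
      plen_zero⟩
  let μ : ℕ → ℕ := fun i => if i = 0 then 2 else if i < d then 1 else 0
  have hμ : ∀ i, μ i = if i = 0 then 2 else if i < d then 1 else 0 := fun _ => rfl
  have hP : IsPartition μ := by
    refine ⟨fun i j hij => ?_, d, fun i hi => ?_⟩
    · rw [hμ, hμ]; split_ifs <;> omega
    · rw [hμ]; split_ifs <;> omega
  refine ⟨μ, hP, ?_, ?_, ?_⟩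
  · intro i
    rw [hμ, hμ]; split_ifs <;> omega
  · funext i
    have up := remove_upper hl μ hP i
    rw [hμ] at up
    by_cases hi : i = 0
    · subst hi
      have hs := (firstSeg_spec hl μ).1
      rw [removeLEdge_rec hl hP, hμ, hμ]
      split_ifs <;> omega
    · split_ifs at up <;> omega
  · apply plen_eq hP
    · rw [hμ]; split_ifs <;> omega
    · intro i hi
      rw [hμ]; split_ifs <;> omega

theorem add_step {l : ℕ} (hl : 2 ≤ l) {ν μ' : ℕ → ℕ} (hν : IsPartition ν) (hνr : IsLRegular l ν)
    (h0 : ν 0 ≠ 0) (hμ : IsPartition μ') (hμr : IsLRegular l μ')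
    (hrem : removeLEdge l μ' = dr ν 1) :
    ∃ μ, IsPartition μ ∧ IsLRegular l μ ∧ removeLEdge l μ = ν ∧ plen μ = plen μ' + 1 := by
  by_cases hA : μ' 0 ≤ ν 0 + 1
  · let μ : ℕ → ℕ := fun i => if i = 0 then ν 0 + l else μ' (i - 1)
    have e0 : μ 0 = ν 0 + l := rfl
    have e1 : ∀ i, μ (i + 1) = μ' i := fun i => rfl
    have hd : dr μ 1 = μ' := rfl
    have hP : IsPartition μ := by
      refine ⟨fun i j hij => ?_, plen μ' + 1, fun i hi => ?_⟩
      · rcases i with _ | i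
        · rcases j with _ | j
          · exact le_rfl
          · have := hμ.1 0 j (by omega)
            rw [e0, e1]; omega
        · obtain ⟨j, rfl⟩ : ∃ k, j = k + 1 := ⟨j - 1, by omega⟩
          exact hμ.1 i j (by omega)
      · obtain ⟨i, rfl⟩ : ∃ k, i = k + 1 := ⟨i - 1, by omega⟩
        rw [e1]; exact (plen_le_iff hμ _).mp (by omega)
    have hf : firstSeg l μ = 1 := by
      apply firstSeg_eq le_rfl _ (by intros; omega) hl
      rw [e0, show μ 1 = μ' 0 from rfl]; omega
    refine ⟨μ, hP, ?_, ?_, ?_⟩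
    · intro i hi
      rcases i with _ | i
      · obtain ⟨k, hk⟩ : ∃ k, 0 + l - 1 = k + 1 := ⟨l - 2, by omega⟩
        rw [hk, e1, e0]
        have := hμ.1 0 k (by omega)
        omega
      · rw [show i + 1 + l - 1 = (i + l - 1) + 1 by omega, e1, e1]
        exact hμr i hi
    · funext i
      rw [removeLEdge_rec hl hP, hf, hd, hrem]
      rcases i with _ | i
      · simp only [e0]; split_ifs <;> omega
      · rw [if_neg (by omega), if_neg (by omega), dr_apply]; congr 1
    · apply plen_eq hP
      · rw [e1]; exact plen_spec hμ
      · intro i hi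
        rcases i with _ | i
        · rw [e0]; omega
        · rw [e1]; exact (lt_plen_iff hμ _).mp (by omega)
  · push Not at hA
    let μ : ℕ → ℕ := fun i => if i = 0 then μ' 0 - 1 else if i = 1 then ν 0 + 1 else μ' (i - 1)
    have e0 : μ 0 = μ' 0 - 1 := rfl
    have e1 : μ 1 = ν 0 + 1 := rfl
    have e2 : ∀ i, 1 ≤ i → μ (i + 1) = μ' i := by
      intro i hi
      show (if i + 1 = 0 then μ' 0 - 1 else if i + 1 = 1 then ν 0 + 1 else μ' (i + 1 - 1)) = _
      rw [if_neg (by omega), if_neg (by omega)]; rfl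
    have hs := firstSeg_spec hl μ'
    have hmin := fun i => firstSeg_min (l := l) (p := μ') (h := i)
    have hrec := removeLEdge_rec hl hμ
    have low := remove_lower hl μ' hμ
    rw [hrem] at hrec low
    simp only [dr_apply] at hrec low
    set h' := firstSeg l μ' with hh'
    have l0 := low 0
    have ν1 := hν.1 0 1 (by omega)
    simp only [zero_add] at l0
    have hend := hrec (h' - 1)
    rw [if_neg (by omega), if_pos (by omega), show h' - 1 + 1 = h' by omega] at hend
    have νh := hν.1 0 h' (by omega)
    have hP : IsPartition μ := by
      refine ⟨fun i j hij => ?_, plen μ' + 1, fun i hi => ?_⟩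
      · refine antitone_nat_of_succ_le (f := μ) (fun n => ?_) hij
        rcases n with _ | _ | n
        · rw [e0, zero_add, e1]; omega
        · rw [zero_add, e1, e2 1 le_rfl]; omega
        · rw [e2 (n + 1) (by omega), e2 (n + 1 + 1) (by omega)]
          exact hμ.1 _ _ (by omega)
      · obtain ⟨i, rfl⟩ : ∃ k, i = k + 1 := ⟨i - 1, by omega⟩
        have hz := (plen_le_iff hμ i).mp (by omega)
        have : i ≠ 0 := by rintro rfl; omega
        rw [e2 i (by omega)]; exact hz
    have hf : firstSeg l μ = h' + 1 := by
      apply firstSeg_eq (by omega) _ _ hl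
      · rw [e0, e2 h' (by omega)]
        have := hμ.1 1 h' (by omega)
        omega
      · intro i hi1 hi2
        rcases i with _ | i
        · omega
        · by_cases hi : i = 0
          · subst hi
            rw [e0, zero_add, e1]; omega
          · rw [e0, e2 i (by omega)]
            have := hmin i (by omega) (by omega)
            have := hμ.1 1 i (by omega)
            omega
    have hd : dr μ (h' + 1) = dr μ' h' := by
      funext j
      rw [dr_apply, dr_apply, ← add_assoc, e2 _ (by omega)]
    have hreg0 := hνr 0 h0
    rw [zero_add] at hreg0
    refine ⟨μ, hP, ?_, ?_, ?_⟩
    · intro i hi heq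
      rcases i with _ | _ | i
      · rw [e0] at heq
        rw [zero_add] at heq
        have m1 := hP.1 1 (l - 1) (by omega)
        rw [heq, e1] at m1
        have hμ0 : μ' 0 = ν 0 + 2 := by omega
        have hh : h' = l - 1 := by
          have hup : h' ≤ l - 1 := by
            apply firstSeg_le (by omega)
            have := hμ.1 1 (l - 1) (by omega)
            omega
          by_contra hne
          have hm := hP.1 (h' + 1) (l - 1) (by omega)
          rw [e2 h' (by omega), heq] at hm
          omega
        rw [hh] at hend
        omega
      · simp only [zero_add] at heq
        rw [show 1 + l - 1 = (l - 1) + 1 by omega, e2 _ (by omega), e1] at heq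
        have := low (l - 2)
        rw [show l - 2 + 1 = l - 1 by omega] at this
        have := hν.1 0 (l - 1) (by omega)
        omega
      · rw [show i + 1 + 1 + l - 1 = (i + 1 + l - 1) + 1 by omega, e2 _ (by omega),
          e2 _ (by omega)] at heq
        rw [e2 _ (by omega)] at hi
        exact hμr _ hi heq
    · funext i
      rw [removeLEdge_rec hl hP, hf, hd]
      rcases i with _ | i
      · rw [if_pos (by omega), zero_add, e1]; omega
      · have hr := hrec i
        rw [hr, e2 (i + 1) (by omega), e0]
        by_cases c1 : i + 1 < h'
        · rw [if_pos c1, if_pos (by omega)]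
        · rw [if_neg c1, if_neg (by omega)]
          by_cases c2 : i + 1 = h'
          · rw [if_pos c2, if_pos (by omega)]; omega
          · rw [if_neg c2, if_neg (by omega)]; congr 1; omega
    · apply plen_eq hP
      · rw [e2 _ ((lt_plen_iff hμ 0).mpr (by omega))]; exact plen_spec hμ
      · intro i hi
        rcases i with _ | i
        · rw [e0]; omega
        · by_cases hi0 : i = 0
          · subst hi0; rw [zero_add, e1]; omega
          · rw [e2 i (by omega)]; exact (lt_plen_iff hμ _).mp (by omega)

theorem add_edge {l : ℕ} (hl : 2 ≤ l) (d : ℕ) (hd : d ≤ l) : ∀ (n : ℕ) (ν : ℕ → ℕ),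
    IsPartition ν → IsLRegular l ν → plen ν = n →
    ∃ μ, IsPartition μ ∧ IsLRegular l μ ∧ removeLEdge l μ = ν ∧ plen μ = n + d := by
  intro n
  induction n with
  | zero =>
    intro ν hν _ hn
    rw [eq_zero_of_zero hν ((plen_le_iff hν 0).mp (by omega)), zero_add]
    exact add_base hl d hd
  | succ n ih =>
    intro ν hν hr hn
    obtain ⟨μ', a, b, c, e⟩ := ih (dr ν 1) (hν.dr 1) (hr.dr hl 1) (by rw [plen_dr hν]; omega)
    obtain ⟨μ, a', b', c', e'⟩ := add_step hl hν hr ((lt_plen_iff hν 0).mp (by omega)) a b c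
    exact ⟨μ, a', b', c', by omega⟩

theorem mullAux_spec {l : ℕ} (hl : 2 ≤ l) : ∀ (n : ℕ) (p : ℕ → ℕ), IsPartition p →
    IsLRegular l p → pdeg p ≤ n →
    IsPartition (mullAux l n p) ∧ IsLRegular l (mullAux l n p) ∧
      plen (mullAux l n p) = mullLen l p := by
  have zero : IsPartition (fun _ => 0) ∧ IsLRegular l (fun _ => 0) ∧
      plen (fun _ => 0) = mullLen l (fun _ => 0) :=
    ⟨isPartition_zero, fun i hi => absurd rfl hi, by rw [plen_zero, mullLen_zero]⟩
  intro n
  induction n with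
  | zero =>
    intro p hp hr hd
    have := remove_pdeg hl hp
    rw [eq_zero_of_zero hp ((plen_le_iff hp 0).mp (by omega))]
    exact zero
  | succ n ih =>
    intro p hp hr hd
    by_cases h0 : p 0 = 0
    · rw [eq_zero_of_zero hp h0]
      simp only [mullAux, if_true]
      exact zero
    · have h1 := remove_pdeg hl hp
      have h2 := (lt_plen_iff hp 0).mpr h0
      obtain ⟨a, b, c⟩ := ih (removeLEdge l p) (remove_isPartition hl hp)
        (remove_regular hl p hp hr) (by omega)
      have h3 := mullLen_remove hl hp
      obtain ⟨μ, a', b', c', e'⟩ := add_edge hl (mullLen l p - mullLen l (removeLEdge l p))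
        (by omega) _ _ a b c
      have := Classical.epsilon_spec (p := fun μ : ℕ → ℕ =>
        IsPartition μ ∧ IsLRegular l μ ∧
          removeLEdge l μ = mullAux l n (removeLEdge l p) ∧ plen μ = mullLen l p)
        ⟨μ, a', b', c', by omega⟩
      simp only [mullAux, if_neg h0]
      exact ⟨this.1, this.2.1, this.2.2.2⟩

theorem plen_mull {l : ℕ} (hl : 2 ≤ l) {p : ℕ → ℕ} (hp : IsPartition p) (hr : IsLRegular l p) :
    plen (mull l p) = mullLen l p :=
  (mullAux_spec hl _ p hp hr le_rfl).2.2

/-! ### Conjugation -/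

theorem lt_conjP_iff {p : ℕ → ℕ} (hp : IsPartition p) (i j : ℕ) : i < conjP p j ↔ j < p i := by
  have key : ∃ k, (Finset.range (plen p)).filter (fun i => j < p i) = Finset.range k ∧
      ∀ i, i < k ↔ j < p i := by
    have hex : ∃ k, p k ≤ j := ⟨plen p, by rw [plen_spec hp]; omega⟩
    have hk : ∀ i, i < Nat.find hex ↔ j < p i := by
      intro i
      constructor
      · intro h
        have := Nat.find_min hex h
        omega
      · intro h
        by_contra hc
        have h1 := Nat.find_spec hex
        have h2 := hp.1 _ _ (not_lt.mp hc)
        omega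
    refine ⟨Nat.find hex, ?_, hk⟩
    ext i
    simp only [Finset.mem_filter, Finset.mem_range, hk]
    constructor
    · exact fun h => h.2
    · intro h
      exact ⟨(lt_plen_iff hp i).mpr (by omega), h⟩
  obtain ⟨k, h1, h2⟩ := key
  unfold conjP
  rw [h1, Finset.card_range]
  exact h2 i

theorem conjP_isPartition {p : ℕ → ℕ} (hp : IsPartition p) : IsPartition (conjP p) := by
  refine ⟨fun i j hij => ?_, p 0, fun i hi => ?_⟩
  · by_contra hc
    push Not at hc
    have := (lt_conjP_iff hp _ _).mp hc
    have := (lt_conjP_iff hp (conjP p i) i).mpr (by omega)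
    omega
  · by_contra hc
    have := (lt_conjP_iff hp 0 i).mp (by omega)
    omega

theorem conjP_regular {l : ℕ} (hl : 2 ≤ l) {p : ℕ → ℕ} (hp : IsPartition p)
    (hr : IsLRestricted l p) : IsLRegular l (conjP p) := by
  intro i hi heq
  have h1 := (lt_conjP_iff hp (conjP p i - 1) (i + l - 1)).mp (by omega)
  have h2 := mt (lt_conjP_iff hp (conjP p i) i).mpr (by omega)
  have h3 := hr (conjP p i - 1)
  rw [show conjP p i - 1 + 1 = conjP p i by omega] at h3
  omega

theorem sub_isPartition {p : ℕ → ℕ} (hp : IsPartition p) (h : ℕ) :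
    IsPartition (fun r => p r - h) := by
  refine ⟨fun i j hij => ?_, plen p, fun i hi => ?_⟩
  · have := hp.1 i j hij
    beta_reduce
    omega
  · have := (plen_le_iff hp i).mp hi
    beta_reduce
    omega

theorem conjP_sub {p : ℕ → ℕ} (hp : IsPartition p) (h : ℕ) :
    conjP (fun r => p r - h) = dr (conjP p) h := by
  funext j
  rw [dr_apply]
  have key : ∀ i, i < conjP (fun r => p r - h) j ↔ i < conjP p (j + h) := by
    intro i
    rw [lt_conjP_iff (sub_isPartition hp h), lt_conjP_iff hp]
    omega
  have a := key (conjP (fun r => p r - h) j)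
  have b := key (conjP p (j + h))
  omega

/-! ### Existence of a decomposition -/

/-- `p` is a sum of restricted distinguished partitions of total weight `m` -/
def Dec (l m : ℕ) (p : ℕ → ℕ) : Prop :=
  ∃ (t : ℕ) (ms : Fin t → ℕ) (lam : Fin t → (ℕ → ℕ)),
    (∀ i, 0 < ms i ∧ ms i < l ∧ IsPartition (lam i) ∧ IsLRestricted l (lam i) ∧
      IsDistinguished l (ms i) (lam i)) ∧
    (∑ i, ms i) = m ∧ ∀ k, p k = ∑ i, lam i k

theorem Dec.zero (l : ℕ) : Dec l 0 (fun _ => 0) :=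
  ⟨0, Fin.elim0, Fin.elim0, fun i => i.elim0, by simp, by simp⟩

theorem Dec.cons {l m m' : ℕ} {p p' : ℕ → ℕ} (h0 : 0 < m') (h1 : m' < l) (h2 : IsPartition p')
    (h3 : IsLRestricted l p') (h4 : IsDistinguished l m' p') (h : Dec l m p) :
    Dec l (m' + m) (fun k => p' k + p k) := by
  obtain ⟨t, ms, lam, a, b, c⟩ := h
  refine ⟨t + 1, Fin.cons m' ms, Fin.cons p' lam, ?_, ?_, ?_⟩
  · intro i
    refine Fin.cases ?_ (fun i => ?_) i
    · exact ⟨h0, h1, h2, h3, h4⟩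
    · exact a i
  · rw [Fin.sum_univ_succ]; simp [b]
  · intro k
    rw [Fin.sum_univ_succ]; simp [c]

theorem Dec.pad {l : ℕ} (hl : 2 ≤ l) {m : ℕ} {p : ℕ → ℕ} (h : Dec l m p) (d : ℕ) :
    Dec l (d + m) p := by
  induction d with
  | zero => rwa [zero_add]
  | succ d ih =>
    have hd : IsDistinguished l 1 (fun _ => 0) :=
      ⟨0, fun _ => 0, fun _ => 0, isPartition_zero, by beta_reduce; omega, fun _ _ _ => le_rfl,
        by beta_reduce; omega, fun _ _ => rfl, fun i => by simp⟩
    have := Dec.cons (l := l) (by omega : 0 < 1) (by omega) isPartition_zero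
      (fun i => by beta_reduce; omega) hd ih
    simp only [zero_add] at this
    rwa [show d + 1 + m = 1 + (d + m) by omega]

theorem dec_exists {l : ℕ} (hl : 2 ≤ l) : ∀ (n : ℕ) (p : ℕ → ℕ), IsPartition p →
    IsLRestricted l p → p 0 ≤ n → Dec l (mullLen l (conjP p)) p := by
  intro n
  induction n with
  | zero =>
    intro p hp _ h
    have hz := eq_zero_of_zero hp (by omega)
    have hc : conjP p = fun _ => 0 := by
      apply eq_zero_of_zero (conjP_isPartition hp)
      by_contra hne
      have := (lt_conjP_iff hp 0 0).mp (by omega)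
      omega
    rw [hc, mullLen_zero, hz]
    exact Dec.zero l
  | succ n ih =>
    intro p hp hr h
    by_cases h0 : p 0 = 0
    · exact ih p hp hr (by omega)
    have hq := conjP_isPartition hp
    have hqr := conjP_regular hl hp hr
    have hq0 : conjP p 0 ≠ 0 := by
      have := (lt_conjP_iff hp 0 0).mpr (by omega)
      omega
    have hlt := firstSeg_lt hl hq hqr hq0
    have hs := firstSeg_spec hl (conjP p)
    have hrec := mullLen_rec hl hq
    have hlast := firstSeg_last hl _ hq
    rw [← conjP_sub hp] at hrec
    set h := firstSeg l (conjP p) with hh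
    have hsub : IsLRestricted l (fun r => p r - h) := by
      intro i
      have := hr i
      beta_reduce
      omega
    have h1 := ih _ (sub_isPartition hp h) hsub (by beta_reduce; omega)
    have hmin : IsPartition (fun r => min (p r) h) := by
      refine ⟨fun i j hij => ?_, plen p, fun i hi => ?_⟩
      · have := hp.1 i j hij
        beta_reduce
        omega
      · have := (plen_le_iff hp i).mp hi
        beta_reduce
        omega
    have h2 := Dec.cons (l := l) (m' := l - h) (p' := fun r => min (p r) h) (by omega) (by omega)
      hmin (fun i => by beta_reduce; omega) ?_ h1
    · convert h2 using 1
      · omega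
      · funext k
        omega
    · set k := conjP p (h - 1) with hk
      refine ⟨k, fun i => min (p (i + k)) h, fun _ => 0, isPartition_zero, by beta_reduce; omega, ?_, ?_, ?_, ?_⟩
      · intro i j hij
        exact hmin.1 _ _ (by omega)
      · have := mt (lt_conjP_iff hp k (h - 1)).mpr (by omega)
        beta_reduce
        rw [zero_add]
        omega
      · intro i hi
        have := mt (lt_conjP_iff hp (i + k) 0).mpr (by omega)
        beta_reduce
        omega
      · intro i
        beta_reduce
        split_ifs with c
        · have := (lt_conjP_iff hp i (h - 1)).mp (by omega)
          omega
        · rw [show i - k + k = i by omega]; omega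

/-! ### The lower bound -/

theorem restricted_distinguished {l m : ℕ} {p : ℕ → ℕ} (hm : m < l)
    (hr : IsLRestricted l p) (hd : IsDistinguished l m p) :
    ∃ k, (∀ r, p r ≤ l - m) ∧ (∀ r, r < k → p r = l - m) ∧ (∀ r, k + m ≤ r → p r = 0) := by
  obtain ⟨k, a, pb, hpb, _, ha, ha0, haz, he⟩ := hd
  have hz : ∀ i, pb i = pb (i + 1) := by
    intro i
    by_contra hne
    have h1 := hpb.1 i (i + 1) (by omega)
    have h2 := hr i
    have h3 : l * (pb (i + 1) + 1) ≤ l * pb i := Nat.mul_le_mul_left l (by omega)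
    have h4 : (if i + 1 < k then l - m else a (i + 1 - k)) ≤
        (if i < k then l - m else a (i - k)) := by
      have := ha (i - k) (i + 1 - k) (by omega)
      have := ha 0 (i + 1 - k) (by omega)
      split_ifs <;> omega
    rw [mul_add] at h3
    rw [he i, he (i + 1)] at h2
    omega
  have hz2 : ∀ i, pb i = pb 0 := by
    intro i
    induction i with
    | zero => rfl
    | succ i ih => rw [← hz, ih]
  obtain ⟨N, hN⟩ := hpb.2
  have hz3 : ∀ i, pb i = 0 := by
    intro i
    rw [hz2, ← hz2 N, hN N le_rfl]
  have he' : ∀ i, p i = if i < k then l - m else a (i - k) := by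
    intro i
    rw [he, hz3]; simp
  refine ⟨k, fun r => ?_, fun r hr => ?_, fun r hr => ?_⟩
  · rw [he']
    have := ha 0 (r - k) (by omega)
    split_ifs <;> omega
  · rw [he', if_pos hr]
  · rw [he']
    have := haz (r - k)
    split_ifs <;> omega

theorem nxt_iter_ge {l : ℕ} (hl : 2 ≤ l) {q : ℕ → ℕ} (hq : IsPartition q) (b K : ℕ) :
    b ≤ (nxt l q)^[K] b ∧ l * K + q ((nxt l q)^[K] b) + b ≤ q b + (nxt l q)^[K] b := by
  induction K with
  | zero => simp [add_comm]
  | succ K ih =>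
    rw [Function.iterate_succ_apply']
    have := nxt_spec hl hq ((nxt l q)^[K] b)
    rw [mul_add]
    omega

theorem nxt_iter_mono {l : ℕ} (hl : 2 ≤ l) {q : ℕ → ℕ} (hq : IsPartition q) (K : ℕ) {b c : ℕ}
    (h : b ≤ c) : (nxt l q)^[K] b ≤ (nxt l q)^[K] c :=
  Monotone.iterate (f := nxt l q) (fun _ _ h => nxt_mono hl hq h) K h

theorem bseq_mono {l : ℕ} (hl : 2 ≤ l) {q : ℕ → ℕ} (hq : IsPartition q) : Monotone (bseq l q) := by
  apply monotone_nat_of_le_succ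
  intro n
  rw [bseq_succ]
  exact (nxt_spec hl hq _).1.le

theorem window_count {l : ℕ} {p : ℕ → ℕ} (hp : IsPartition p)
    {t : ℕ} {ms : Fin t → ℕ} {lam : Fin t → (ℕ → ℕ)} {k : Fin t → ℕ}
    (hms : ∀ i, ms i < l)
    (hub : ∀ i r, lam i r ≤ l - ms i) (htop : ∀ i r, r < k i → lam i r = l - ms i)
    (hbot : ∀ i r, k i + ms i ≤ r → lam i r = 0)
    (hsum : ∀ r, p r = ∑ i, lam i r) (j : ℕ) (hj : j < ∑ i, (l - ms i)) (v : ℕ)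
    (hv : conjP p j < v) (hcov : ∀ w, conjP p j < w → w < v → ∃ i, k i < w ∧ w ≤ k i + ms i) :
    (j + 1 - p (v - 1)) + (v - 1 - conjP p j) ≤
      l * (Finset.univ.filter fun i => k i < v ∧ conjP p j ≤ k i + ms i).card := by
  set K := Finset.univ.filter fun i => k i < v ∧ conjP p j ≤ k i + ms i with hK
  have memK : ∀ i, i ∈ K ↔ k i < v ∧ conjP p j ≤ k i + ms i := by
    intro i; rw [hK]; simp
  have h1 : l * K.card = ∑ i ∈ K, (l - ms i) + ∑ i ∈ K, ms i := by
    rw [← Finset.sum_add_distrib, mul_comm, ← smul_eq_mul, ← Finset.sum_const]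
    apply Finset.sum_congr rfl
    intro i _
    have := hms i
    omega
  have h2 : v - 1 - conjP p j ≤ ∑ i ∈ K, ms i := by
    have hsub : Finset.Ioo (conjP p j) v ⊆ K.biUnion fun i => Finset.Ioc (k i) (k i + ms i) := by
      intro w hw
      rw [Finset.mem_Ioo] at hw
      obtain ⟨i, hi1, hi2⟩ := hcov w hw.1 hw.2
      rw [Finset.mem_biUnion]
      exact ⟨i, (memK i).mpr ⟨by omega, by omega⟩, Finset.mem_Ioc.mpr ⟨hi1, hi2⟩⟩
    have c1 := Finset.card_le_card hsub
    have c2 := Finset.card_biUnion_le (s := K) (t := fun i => Finset.Ioc (k i) (k i + ms i))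
    simp only [Nat.card_Ioo, Nat.card_Ioc, Nat.add_sub_cancel_left] at c1 c2
    omega
  have h3 : j + 1 ≤ p (v - 1) + ∑ i ∈ K, (l - ms i) := by
    -- number of columns of length at least `conjP p j` in each group
    let L : Fin t → ℕ := fun i => if conjP p j = 0 then l - ms i else lam i (conjP p j - 1)
    have hL : j + 1 ≤ ∑ i, L i := by
      by_cases hz : conjP p j = 0
      · simp only [L, if_pos hz]; omega
      · simp only [L, if_neg hz]
        rw [← hsum]
        have := (lt_conjP_iff hp (conjP p j - 1) j).mp (by omega)
        omega
    have hLb : ∀ i, L i ≤ lam i (v - 1) + if i ∈ K then l - ms i else 0 := by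
      intro i
      have u := hub i (conjP p j - 1)
      by_cases hi : i ∈ K
      · rw [if_pos hi]
        simp only [L]
        split_ifs <;> omega
      · rw [if_neg hi]
        rw [memK] at hi
        simp only [L]
        by_cases hkv : k i < v
        · have := hbot i (conjP p j - 1) (by omega)
          split_ifs <;> omega
        · have := htop i (v - 1) (by omega)
          split_ifs <;> omega
    have hS := Finset.sum_le_sum (s := Finset.univ) (fun i _ => hLb i)
    rw [Finset.sum_add_distrib, ← hsum, Finset.sum_ite_mem, Finset.univ_inter] at hS
    omega
  omega

theorem cover_bound {l : ℕ} (hl : 2 ≤ l) {p : ℕ → ℕ} (hp : IsPartition p)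
    {t : ℕ} {ms : Fin t → ℕ} {lam : Fin t → (ℕ → ℕ)} {k : Fin t → ℕ}
    (hms : ∀ i, ms i < l)
    (hub : ∀ i r, lam i r ≤ l - ms i) (htop : ∀ i r, r < k i → lam i r = l - ms i)
    (hbot : ∀ i r, k i + ms i ≤ r → lam i r = 0)
    (hsum : ∀ r, p r = ∑ i, lam i r) : ∀ j, j < ∑ i, (l - ms i) →
      j < bseq l (conjP p) (Finset.univ.filter fun i => conjP p j ≤ k i + ms i).card := by
  have hq := conjP_isPartition hp
  intro j
  induction j using Nat.strong_induction_on with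
  | _ j ih =>
    intro hj
    -- conclusion from a window
    have fin : ∀ v C, conjP p j < v →
        (∀ w, conjP p j < w → w < v → ∃ i, k i < w ∧ w ≤ k i + ms i) →
        p (v - 1) ≤ bseq l (conjP p) C → p (v - 1) ≤ j →
        C + (Finset.univ.filter fun i => k i < v ∧ conjP p j ≤ k i + ms i).card ≤
          (Finset.univ.filter fun i => conjP p j ≤ k i + ms i).card →
        j < bseq l (conjP p) (Finset.univ.filter fun i => conjP p j ≤ k i + ms i).card := by
      intro v C hv hcov hb hbj hcard
      have w := window_count hp hms hub htop hbot hsum j hj v hv hcov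
      set K := (Finset.univ.filter fun i => k i < v ∧ conjP p j ≤ k i + ms i).card with hK
      set b := p (v - 1) with hbdef
      have g := nxt_iter_ge hl hq b K
      have hqb : conjP p b ≤ v - 1 := by
        by_contra hc
        have := (lt_conjP_iff hp (v - 1) b).mp (by omega)
        omega
      have mono := nxt_iter_mono hl hq K hb
      have eq : (nxt l (conjP p))^[K] (bseq l (conjP p) C) = bseq l (conjP p) (K + C) := by
        unfold bseq
        rw [Function.iterate_add_apply]
      have m2 := bseq_mono hl hq (show K + C ≤ (Finset.univ.filter fun i => conjP p j ≤ k i + ms i).card by omega)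
      rw [eq] at mono
      refine lt_of_lt_of_le ?_ (le_trans mono m2)
      by_contra hc
      push Not at hc
      have := hq.1 _ _ hc
      omega
    by_cases hgap : ∃ v, conjP p j < v ∧ v ≤ conjP p 0 ∧ ¬ ∃ i, k i < v ∧ v ≤ k i + ms i
    · have hv := Nat.find_spec hgap
      have hmin := fun w => Nat.find_min hgap (m := w)
      set v := Nat.find hgap with hvdef
      obtain ⟨hv1, hv2, hv3⟩ := hv
      have hb1 : 0 < p (v - 1) := (lt_conjP_iff hp (v - 1) 0).mp (by omega)
      have hbj : p (v - 1) ≤ j := by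
        by_contra hc
        have := (lt_conjP_iff hp (v - 1) j).mpr (by omega)
        omega
      have hqb : v - 1 < conjP p (p (v - 1) - 1) := (lt_conjP_iff hp _ _).mpr (by omega)
      have ihb := ih (p (v - 1) - 1) (by omega) (by omega)
      refine fin v (Finset.univ.filter fun i => conjP p (p (v - 1) - 1) ≤ k i + ms i).card hv1 ?_ (by omega) hbj ?_
      · intro w hw1 hw2
        by_contra hc
        exact hmin w hw2 ⟨hw1, by omega, hc⟩
      · rw [← Finset.card_union_of_disjoint]
        · apply Finset.card_le_card
          intro i
          simp only [Finset.mem_union, Finset.mem_filter, Finset.mem_univ, true_and]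
          omega
        · rw [Finset.disjoint_left]
          intro i
          simp only [Finset.mem_filter, Finset.mem_univ, true_and]
          intro h1 h2
          exact hv3 ⟨i, h2.1, by omega⟩
    · have hmon := hq.1 0 j (by omega)
      have hz : p (conjP p 0) = 0 := by
        by_contra hc
        have := (lt_conjP_iff hp (conjP p 0) 0).mpr (by omega)
        omega
      refine fin (conjP p 0 + 1) 0 (by omega) ?_ ?_ ?_ ?_
      · intro w hw1 hw2
        by_contra hc
        exact hgap ⟨w, hw1, by omega, hc⟩
      · rw [Nat.add_sub_cancel, hz]; omega
      · rw [Nat.add_sub_cancel, hz]; omega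
      · rw [zero_add]
        apply Finset.card_le_card
        intro i
        simp only [Finset.mem_filter, Finset.mem_univ, true_and]
        exact fun h => h.2

theorem dec_bound {l : ℕ} (hl : 2 ≤ l) {m : ℕ} {p : ℕ → ℕ} (hp : IsPartition p)
    (h : Dec l m p) : mullLen l (conjP p) ≤ m := by
  obtain ⟨t, ms, lam, h1, h2, hsum⟩ := h
  have hq := conjP_isPartition hp
  choose k hub htop hbot using fun i =>
    restricted_distinguished (h1 i).2.1 (h1 i).2.2.2.1 (h1 i).2.2.2.2
  have hms : ∀ i, ms i < l := fun i => (h1 i).2.1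
  have cb := cover_bound hl hp hms hub htop hbot hsum
  have hN : ∑ i, (l - ms i) ≤ bseq l (conjP p) t := by
    by_contra hc
    push Not at hc
    have c1 := cb (∑ i, (l - ms i) - 1) (by omega)
    have c2 := Finset.card_le_univ (Finset.univ.filter fun i =>
      conjP p (∑ i, (l - ms i) - 1) ≤ k i + ms i)
    rw [Fintype.card_fin] at c2
    have := bseq_mono hl hq c2
    omega
  have hp0 : p 0 ≤ ∑ i, (l - ms i) := by
    rw [hsum]
    exact Finset.sum_le_sum fun i _ => hub i 0
  have hz : conjP p (bseq l (conjP p) t) = 0 := by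
    by_contra hc
    have := (lt_conjP_iff hp 0 (bseq l (conjP p) t)).mp (by omega)
    omega
  have e := mullLen_bseq hl hq t hz
  have tot : ∑ i, (l - ms i) + ∑ i, ms i = l * t := by
    rw [← Finset.sum_add_distrib, Finset.sum_congr rfl
      (fun i _ => show l - ms i + ms i = l by have := hms i; omega)]
    simp [mul_comm]
  omega

/-- Let `λ` be an `l`-restricted partition and `m ≥ 1`. Then `ℓ(Mull(λ')) ≤ m` (i.e. `λ`
is `m`-special) if and only if `λ = λ¹ + … + λᵗ` where each `λⁱ` is an `l`-restricted
`m_i`-distinguished partition for some `0 < m_i < l`, and `m = m_1 + … + m_t`. -/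
theorem mSpecial_iff_sum_of_restricted_distinguished (l : ℕ) (hl : 2 ≤ l)
    (m : ℕ) (hm : 1 ≤ m) (p : ℕ → ℕ) (hp : IsPartition p) (hres : IsLRestricted l p) :
    plen (mull l (conjP p)) ≤ m ↔
      ∃ (t : ℕ) (ms : Fin t → ℕ) (lam : Fin t → (ℕ → ℕ)),
        (∀ i, 0 < ms i ∧ ms i < l ∧ IsPartition (lam i) ∧ IsLRestricted l (lam i) ∧
          IsDistinguished l (ms i) (lam i)) ∧
        (∑ i, ms i) = m ∧ ∀ k, p k = ∑ i, lam i k := by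
  have hr := conjP_regular hl hp hres
  rw [plen_mull hl (conjP_isPartition hp) hr]
  constructor
  · intro h
    have := (dec_exists hl _ p hp hres le_rfl).pad hl (m - mullLen l (conjP p))
    rwa [Nat.sub_add_cancel h] at this
  · exact fun h => dec_bound hl hp h
end
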